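/- Let G be a 2-connected graph of even order n ≥ 4 with α(G) = α(C_n). Then G ≅ C_n, or G ≅ H₂(i₁,…,i_k) = C_n + v_{i₁}v_{n−i₁} + ⋯ + v_{i_k}v_{n−i_k} for some 1 ≤ i₁ ≤ ⋯ ≤ i_k ≤ (n−2)/2, or G ≅ H₃(j₁,…,j_s) = C_n + v_{j₁}v_{n−j₁−1} + ⋯ + v_{j_s}v_{n−j_s−1} for some 1 ≤ j₁ ≤ ⋯ ≤ j_s ≤ (n−4)/2. -/

import Mathlib

open Matrix SimpleGraph

/-- The algebraic connectivity of `G`: the infimum of the Rayleigh quotients of the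
Laplacian matrix over nonzero vectors orthogonal to the all-ones vector.  For a graph on
at least two vertices this is the second smallest eigenvalue of the Laplacian. -/
noncomputable def algCon {V : Type*} [Fintype V] [DecidableEq V] (G : SimpleGraph V) : ℝ :=
  letI := Classical.decRel G.Adj
  sInf { r : ℝ | ∃ x : V → ℝ, x ≠ 0 ∧ (∑ v, x v) = 0 ∧
    r = (x ⬝ᵥ (G.lapMatrix ℝ *ᵥ x)) / (∑ v, (x v) ^ 2) }

/-- A graph is 2-connected if it has at least two vertices and every pair of distinct
vertices is joined by (at least) two internally disjoint paths. -/
def TwoConnected {V : Type*} (G : SimpleGraph V) : Prop :=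
  (∃ u v : V, u ≠ v) ∧ ∀ u v : V, u ≠ v → ∃ p q : G.Walk u v, p.IsPath ∧ q.IsPath ∧
    ∀ w, w ∈ p.support → w ∈ q.support → w = u ∨ w = v

/-- `G` is a θ-graph: it consists of three pairwise internally disjoint paths with common
endpoints `a ≠ b`, which together exhaust all vertices and all edges of `G`. -/
def IsThetaGraph {V : Type*} (G : SimpleGraph V) : Prop :=
  ∃ (a b : V) (p₁ p₂ p₃ : G.Walk a b), a ≠ b ∧ p₁.IsPath ∧ p₂.IsPath ∧ p₃.IsPath ∧
    (∀ w, w ∈ p₁.support → w ∈ p₂.support → w = a ∨ w = b) ∧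
    (∀ w, w ∈ p₁.support → w ∈ p₃.support → w = a ∨ w = b) ∧
    (∀ w, w ∈ p₂.support → w ∈ p₃.support → w = a ∨ w = b) ∧
    (∀ w : V, w ∈ p₁.support ∨ w ∈ p₂.support ∨ w ∈ p₃.support) ∧
    (∀ e, e ∈ G.edgeSet ↔ e ∈ p₁.edges ∨ e ∈ p₂.edges ∨ e ∈ p₃.edges)

/-- The cycle `C_n` on vertices `v₀, …, v_{n-1}` together with the chords
`v_{(f j).1} v_{(f j).2}` for `j = 1, …, k`. -/
def cyclePlusChords (n k : ℕ) (f : Fin k → ℕ × ℕ) : SimpleGraph (Fin n) :=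
  SimpleGraph.cycleGraph n ⊔ SimpleGraph.fromEdgeSet
    {e | ∃ (j : Fin k) (a b : Fin n), (a : ℕ) = (f j).1 ∧ (b : ℕ) = (f j).2 ∧ e = s(a, b)}

/-- `H₁(i₁,…,i_k) = C_n + v_{i₁}v_{n−i₁} + ⋯ + v_{i_k}v_{n−i_k}` (`n` odd); this is also
the graph `H₂(i₁,…,i_k)` when `n` is even. -/
def H12 (n k : ℕ) (i : Fin k → ℕ) : SimpleGraph (Fin n) :=
  cyclePlusChords n k (fun j => (i j, n - i j))

/-- `H₃(i₁,…,i_k) = C_n + v_{i₁}v_{n−i₁−1} + ⋯ + v_{i_k}v_{n−i_k−1}` (`n` even). -/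
def H3 (n k : ℕ) (i : Fin k → ℕ) : SimpleGraph (Fin n) :=
  cyclePlusChords n k (fun j => (i j, n - i j - 1))

/-!
Number the vertices in the order of a Fiedler vector. Its Dirichlet energy is then a combination,
with nonnegative coefficients (products of two gaps between consecutive values), of the numbers of
edges lying in two given cuts `{0, …, i} | {i + 1, …, n - 1}`. The absence of cut vertices bounds
these numbers below by their values for one particular copy of `C_n`, the zigzag cycle
`0, 2, 4, …, 5, 3, 1`. So if the algebraic connectivity is at most that of `C_n`, then all these
inequalities with a nonzero coefficient are equalities, and the vector is also a Fiedler vector of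
the zigzag cycle. Its eigenvector equations there transport a vanishing gap from `i` to `i ± 2`, so
all gaps of one parity are positive. Hence every second cut has exactly two edges and no edge lies
in two of these cuts: the vertices fall into consecutive blocks of size at most two, joined by two
parallel paths which, closed up at the ends, form a Hamilton cycle. All other edges lie inside
blocks, which makes them the chords `v_p v_{c - p}` for a constant `c ∈ {n - 1, n}`.
-/

section DirichletEnergy

variable {V W : Type*} [Fintype V] [Fintype W]

open Classical in
/-- The Dirichlet energy `∑_{uv ∈ E(G)} (x u - x v)²`, the quadratic form of the Laplacian.
The double sum visits every edge twice, hence the factor `1 / 2`. -/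
noncomputable def dirichletEnergy (G : SimpleGraph V) (x : V → ℝ) : ℝ :=
  (∑ u, ∑ v, if G.Adj u v then (x u - x v) ^ 2 else 0) / 2

lemma dotProduct_lapMatrix_mulVec [DecidableEq V] (G : SimpleGraph V) [DecidableRel G.Adj]
    (x : V → ℝ) : x ⬝ᵥ (G.lapMatrix ℝ *ᵥ x) = dirichletEnergy G x := by
  rw [← toLinearMap₂'_apply', lapMatrix_toLinearMap₂', dirichletEnergy]
  congr! 5

lemma dirichletEnergy_nonneg (G : SimpleGraph V) (x : V → ℝ) : 0 ≤ dirichletEnergy G x := by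
  unfold dirichletEnergy
  positivity

lemma dirichletEnergy_smul (G : SimpleGraph V) (c : ℝ) (x : V → ℝ) :
    dirichletEnergy G (c • x) = c ^ 2 * dirichletEnergy G x := by
  classical
  rw [← dotProduct_lapMatrix_mulVec, ← dotProduct_lapMatrix_mulVec, mulVec_smul,
    smul_dotProduct, dotProduct_smul, smul_eq_mul, smul_eq_mul]
  ring

lemma dirichletEnergy_comp_iso {G : SimpleGraph V} {H : SimpleGraph W} (e : G ≃g H)
    (x : W → ℝ) : dirichletEnergy G (x ∘ e) = dirichletEnergy H x := by
  classical
  unfold dirichletEnergy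
  congr 1
  refine Fintype.sum_equiv e.toEquiv _ _ fun u => Fintype.sum_equiv e.toEquiv _ _ fun v => ?_
  exact if_congr e.map_adj_iff.symm rfl rfl

lemma continuous_dirichletEnergy (G : SimpleGraph V) : Continuous (dirichletEnergy G) := by
  unfold dirichletEnergy
  refine (continuous_finsetSum _ fun u _ => continuous_finsetSum _ fun v _ => ?_).div_const _
  split_ifs <;> fun_prop

lemma dotProduct_lapMatrix_mulVec_comm [DecidableEq V] (G : SimpleGraph V) [DecidableRel G.Adj]
    (x y : V → ℝ) : x ⬝ᵥ (G.lapMatrix ℝ *ᵥ y) = y ⬝ᵥ (G.lapMatrix ℝ *ᵥ x) := by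
  rw [dotProduct_mulVec, ← mulVec_transpose, (isSymm_lapMatrix ℝ G).eq, dotProduct_comm]

lemma dirichletEnergy_add_smul [DecidableEq V] (G : SimpleGraph V) [DecidableRel G.Adj]
    (x y : V → ℝ) (t : ℝ) : dirichletEnergy G (x + t • y) =
      dirichletEnergy G x + 2 * t * (y ⬝ᵥ (G.lapMatrix ℝ *ᵥ x)) + t ^ 2 * dirichletEnergy G y := by
  simp only [← dotProduct_lapMatrix_mulVec, mulVec_add, mulVec_smul, add_dotProduct,
    dotProduct_add, smul_dotProduct, dotProduct_smul, smul_eq_mul,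
    dotProduct_lapMatrix_mulVec_comm G x y]
  ring

lemma sum_sq_pos {x : V → ℝ} (hx : x ≠ 0) : 0 < ∑ v, x v ^ 2 := by
  obtain ⟨v, hv⟩ := Function.ne_iff.1 hx
  exact Finset.sum_pos' (fun _ _ => sq_nonneg _) ⟨v, Finset.mem_univ v, sq_pos_of_ne_zero hv⟩

lemma sum_sq_inv_sqrt_smul {x : V → ℝ} (hx : x ≠ 0) :
    ∑ v, ((√(∑ v, x v ^ 2))⁻¹ • x) v ^ 2 = 1 := by
  have hpos := sum_sq_pos hx
  simp only [Pi.smul_apply, smul_eq_mul, mul_pow, ← Finset.mul_sum, inv_pow]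
  rw [Real.sq_sqrt hpos.le, inv_mul_cancel₀ hpos.ne']

end DirichletEnergy

section FiedlerVector

variable {V W : Type*} [Fintype V] [DecidableEq V] [Fintype W] [DecidableEq W]

lemma algCon_eq_sInf (G : SimpleGraph V) :
    algCon G = sInf {r : ℝ | ∃ x : V → ℝ, x ≠ 0 ∧ ∑ v, x v = 0 ∧
      r = dirichletEnergy G x / ∑ v, x v ^ 2} := by
  simp only [algCon, dotProduct_lapMatrix_mulVec]

lemma algCon_mul_sum_sq_le (G : SimpleGraph V) {x : V → ℝ} (hx : ∑ v, x v = 0) :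
    algCon G * ∑ v, x v ^ 2 ≤ dirichletEnergy G x := by
  rcases eq_or_ne x 0 with rfl | hx0
  · simpa using dirichletEnergy_nonneg G 0
  · rw [← le_div_iff₀ (sum_sq_pos hx0), algCon_eq_sInf]
    refine csInf_le ⟨0, ?_⟩ ⟨x, hx0, hx, rfl⟩
    rintro _ ⟨y, -, -, rfl⟩
    exact div_nonneg (dirichletEnergy_nonneg G y) (Finset.sum_nonneg fun _ _ => sq_nonneg _)

/-- A Fiedler vector of `G`: a nonzero vector orthogonal to the all-ones vector at which the
Rayleigh quotient of the Laplacian attains the algebraic connectivity. -/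
structure IsFiedlerVector (G : SimpleGraph V) (x : V → ℝ) : Prop where
  ne_zero : x ≠ 0
  sum_eq_zero : ∑ v, x v = 0
  energy_eq : dirichletEnergy G x = algCon G * ∑ v, x v ^ 2

lemma isCompact_sum_eq_zero_sum_sq_eq_one (V : Type*) [Fintype V] :
    IsCompact {x : V → ℝ | ∑ v, x v = 0 ∧ ∑ v, x v ^ 2 = 1} := by
  refine Metric.isCompact_of_isClosed_isBounded
    ((isClosed_eq (by fun_prop) (by fun_prop)).inter (isClosed_eq (by fun_prop) (by fun_prop)))
    (Metric.isBounded_closedBall (x := (0 : V → ℝ)) (r := 1) |>.subset ?_)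
  rintro x ⟨-, hx⟩
  rw [mem_closedBall_zero_iff, pi_norm_le_iff_of_nonneg zero_le_one]
  intro v
  rw [Real.norm_eq_abs, ← sq_le_one_iff_abs_le_one, ← hx]
  exact Finset.single_le_sum (f := fun v => x v ^ 2) (fun _ _ => sq_nonneg _) (Finset.mem_univ v)

lemma exists_isFiedlerVector [Nontrivial V] (G : SimpleGraph V) : ∃ x, IsFiedlerVector G x := by
  let K : Set (V → ℝ) := {x | ∑ v, x v = 0 ∧ ∑ v, x v ^ 2 = 1}
  have normalize_mem {x : V → ℝ} (hx : x ≠ 0) (hsum : ∑ v, x v = 0) :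
      (√(∑ v, x v ^ 2))⁻¹ • x ∈ K :=
    ⟨by simp [← Finset.mul_sum, hsum], sum_sq_inv_sqrt_smul hx⟩
  have hK : K.Nonempty := by
    obtain ⟨u, v, huv⟩ := exists_pair_ne V
    refine ⟨_, normalize_mem (x := Pi.single u 1 - Pi.single v 1) (fun h => ?_) (by simp)⟩
    simpa [huv] using congrFun h u
  obtain ⟨x, ⟨hsum, hsq⟩, hmin⟩ := (isCompact_sum_eq_zero_sum_sq_eq_one V).exists_isMinOn hK
    (continuous_dirichletEnergy G).continuousOn
  have hx : x ≠ 0 := by rintro rfl; simp at hsq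
  refine ⟨x, hx, hsum, le_antisymm ?_ (algCon_mul_sum_sq_le G hsum)⟩
  rw [hsq, mul_one, algCon_eq_sInf]
  refine le_csInf ⟨_, x, hx, hsum, rfl⟩ ?_
  rintro _ ⟨y, hy, hysum, rfl⟩
  calc dirichletEnergy G x ≤ dirichletEnergy G ((√(∑ v, y v ^ 2))⁻¹ • y) :=
        hmin (normalize_mem hy hysum)
    _ = dirichletEnergy G y / ∑ v, y v ^ 2 := by
        rw [dirichletEnergy_smul, inv_pow, Real.sq_sqrt (sum_sq_pos hy).le, inv_mul_eq_div]

lemma algCon_congr {G : SimpleGraph V} {H : SimpleGraph W} (e : G ≃g H) :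
    algCon G = algCon H := by
  rw [algCon_eq_sInf, algCon_eq_sInf]
  congr 1
  ext r
  refine ((e.symm.toEquiv.arrowCongr (Equiv.refl ℝ)).exists_congr fun x => ?_).symm
  have hx : e.symm.toEquiv.arrowCongr (Equiv.refl ℝ) x = x ∘ e := rfl
  have hsum : ∑ v, (x ∘ e) v = ∑ w, x w := e.toEquiv.sum_comp x
  have hsq : ∑ v, (x ∘ e) v ^ 2 = ∑ w, x w ^ 2 := e.toEquiv.sum_comp fun w => x w ^ 2
  have hzero : x ∘ e = 0 ↔ x = 0 :=
    e.surjective.injective_comp_right.eq_iff' (Pi.zero_comp e)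
  rw [hx, dirichletEnergy_comp_iso, hsum, hsq, ne_eq, ne_eq, hzero]

lemma IsFiedlerVector.comp_iso {G : SimpleGraph V} {H : SimpleGraph W} {x : W → ℝ}
    (hx : IsFiedlerVector H x) (e : G ≃g H) : IsFiedlerVector G (x ∘ e) where
  ne_zero h := hx.ne_zero <| e.surjective.injective_comp_right (by simpa using h)
  sum_eq_zero := (e.toEquiv.sum_comp x).trans hx.sum_eq_zero
  energy_eq := by
    rw [dirichletEnergy_comp_iso, hx.energy_eq, algCon_congr e]
    exact congrArg _ (e.toEquiv.sum_comp fun v => x v ^ 2).symm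

/-- The first variation of `dirichletEnergy G - algCon G • ‖·‖²` at its minimum `x`, in the
direction of the residual `y = L x - α x`, is `2 ‖y‖²`. -/
lemma IsFiedlerVector.lapMatrix_mulVec {G : SimpleGraph V} [DecidableRel G.Adj] {x : V → ℝ}
    (hx : IsFiedlerVector G x) : G.lapMatrix ℝ *ᵥ x = algCon G • x := by
  have sum_eq (z : V → ℝ) : ∑ v, z v = 1 ⬝ᵥ z := (one_dotProduct z).symm
  have sum_sq_eq (z : V → ℝ) : ∑ v, z v ^ 2 = z ⬝ᵥ z := by simp [dotProduct, sq]
  set y := G.lapMatrix ℝ *ᵥ x - algCon G • x with hy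
  have hysum : ∑ v, y v = 0 := by
    have h1 : G.lapMatrix ℝ *ᵥ 1 = 0 := lapMatrix_mulVec_const_eq_zero G
    rw [sum_eq, hy, dotProduct_sub, dotProduct_smul, ← sum_eq x, hx.sum_eq_zero,
      dotProduct_lapMatrix_mulVec_comm, h1, dotProduct_zero, smul_zero, sub_zero]
  have hyy : y ⬝ᵥ y = y ⬝ᵥ (G.lapMatrix ℝ *ᵥ x) - algCon G * (x ⬝ᵥ y) := by
    nth_rw 2 [hy]
    rw [dotProduct_sub, dotProduct_smul, smul_eq_mul, dotProduct_comm x]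
  have variation (t : ℝ) :
      0 ≤ (dirichletEnergy G y - algCon G * (y ⬝ᵥ y)) * (t * t) + 2 * (y ⬝ᵥ y) * t + 0 := by
    have hmin := algCon_mul_sum_sq_le G (x := x + t • y)
      (by simp [Finset.sum_add_distrib, ← Finset.mul_sum, hx.sum_eq_zero, hysum])
    rw [dirichletEnergy_add_smul, hx.energy_eq, sum_sq_eq, sum_sq_eq, add_dotProduct,
      dotProduct_add, dotProduct_add, smul_dotProduct, dotProduct_smul, smul_dotProduct,
      dotProduct_smul, dotProduct_comm y x] at hmin
    simp only [smul_eq_mul] at hmin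
    linear_combination hmin - 2 * t * hyy
  have hzero : y ⬝ᵥ y = 0 := by
    have := discrim_le_zero variation
    unfold discrim at this
    nlinarith [sq_nonneg (y ⬝ᵥ y)]
  exact sub_eq_zero.1 (dotProduct_self_eq_zero.1 hzero)

end FiedlerVector

section NoCutVertex

variable {V W : Type*}

/-- `G` has no cut vertex: deleting any vertex `v` leaves the remaining vertices pairwise
joined by walks. -/
def NoCutVertex (G : SimpleGraph V) : Prop :=
  ∀ v u w : V, u ≠ v → w ≠ v → ∃ p : G.Walk u w, v ∉ p.support

lemma TwoConnected.noCutVertex {G : SimpleGraph V} (hG : TwoConnected G) : NoCutVertex G := by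
  intro v u w huv hwv
  rcases eq_or_ne u w with rfl | huw
  · exact ⟨.nil, by simpa using huv.symm⟩
  · obtain ⟨p, q, -, -, hpq⟩ := hG.2 u w huw
    by_contra! hall
    rcases hpq v (hall p) (hall q) with rfl | rfl
    exacts [huv rfl, hwv rfl]

lemma NoCutVertex.of_iso {G : SimpleGraph V} {H : SimpleGraph W} (hG : NoCutVertex G)
    (e : H ≃g G) : NoCutVertex H := by
  intro v u w huv hwv
  obtain ⟨p, hp⟩ := hG (e v) (e u) (e w) (e.injective.ne huv) (e.injective.ne hwv)
  refine ⟨(p.map e.symm.toHom).copy (e.symm_apply_apply u) (e.symm_apply_apply w), ?_⟩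
  rw [Walk.support_copy, Walk.support_map, List.mem_map]
  rintro ⟨z, hz, rfl⟩
  exact hp (by simpa using hz)

lemma NoCutVertex.exists_adj {G : SimpleGraph V} (hG : NoCutVertex G) (S : Set V) {v u w : V}
    (huv : u ≠ v) (hwv : w ≠ v) (hu : u ∈ S) (hw : w ∉ S) :
    ∃ a b, G.Adj a b ∧ a ∈ S ∧ b ∉ S ∧ a ≠ v ∧ b ≠ v := by
  obtain ⟨p, hp⟩ := hG v u w huv hwv
  obtain ⟨d, hd, hfst, hsnd⟩ := p.exists_boundary_dart S hu hw
  exact ⟨d.fst, d.snd, d.adj, hfst, hsnd,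
    ne_of_mem_of_not_mem (p.dart_fst_mem_support_of_mem_darts hd) hp,
    ne_of_mem_of_not_mem (p.dart_snd_mem_support_of_mem_darts hd) hp⟩

lemma NoCutVertex.adj_of_forall_adj {G : SimpleGraph V} (hG : NoCutVertex G) {a b c : V}
    (hab : a ≠ b) (hac : a ≠ c) (hbc : b ≠ c) (ha : ∀ v, G.Adj a v → v = b ∨ v = c) :
    G.Adj a b := by
  obtain ⟨_, v, hadj, rfl, -, -, hvc⟩ := hG.exists_adj {a} hac hbc rfl hab.symm
  obtain rfl := (ha v hadj).resolve_right hvc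
  exact hadj

end NoCutVertex

section CutEdges

variable {n : ℕ}

open Classical in
/-- The edges of `G`, oriented upwards, which separate `{0, …, i}` from `{i + 1, …, n - 1}`. -/
noncomputable def cutEdges (G : SimpleGraph (Fin n)) (i : ℕ) : Finset (Fin n × Fin n) :=
  {e | G.Adj e.1 e.2 ∧ (e.1 : ℕ) ≤ i ∧ i < (e.2 : ℕ)}

lemma mem_cutEdges {G : SimpleGraph (Fin n)} {i : ℕ} {e : Fin n × Fin n} :
    e ∈ cutEdges G i ↔ G.Adj e.1 e.2 ∧ (e.1 : ℕ) ≤ i ∧ i < (e.2 : ℕ) := by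
  simp [cutEdges]

open Classical in
lemma dirichletEnergy_eq_sum_lt (G : SimpleGraph (Fin n)) (x : Fin n → ℝ) :
    dirichletEnergy G x =
      ∑ e : Fin n × Fin n, if G.Adj e.1 e.2 ∧ e.1 < e.2 then (x e.2 - x e.1) ^ 2 else 0 := by
  have split_by_order (u v : Fin n) : (if G.Adj u v then (x u - x v) ^ 2 else 0) =
      (if G.Adj u v ∧ u < v then (x v - x u) ^ 2 else 0) +
        if G.Adj v u ∧ v < u then (x u - x v) ^ 2 else 0 := by
    rcases lt_trichotomy u v with h | rfl | h
    · simp only [h, h.not_gt, and_true, and_false, if_false, add_zero, sub_sq_comm (x u)]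
    · simp
    · simp only [h, h.not_gt, and_true, and_false, if_false, zero_add, G.adj_comm v u]
  simp only [dirichletEnergy, split_by_order, Finset.sum_add_distrib]
  rw [Finset.sum_comm (f := fun u v => if G.Adj v u ∧ v < u then (x u - x v) ^ 2 else 0),
    ← Fintype.sum_prod_type', add_self_div_two]

/-- An edge `ab` with `a < b` contributes `(X b - X a)²`, the square of the sum of the gaps
`X (i + 1) - X i` over those `i` whose cut the edge belongs to. -/
lemma dirichletEnergy_eq_sum_card_cutEdges (G : SimpleGraph (Fin n)) (X : ℕ → ℝ) :
    dirichletEnergy G (fun i => X i) = ∑ i ∈ Finset.range (n - 1), ∑ j ∈ Finset.range (n - 1),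
      (cutEdges G i ∩ cutEdges G j).card * ((X (i + 1) - X i) * (X (j + 1) - X j)) := by
  classical
  have gap_sum {e : Fin n × Fin n} (he : G.Adj e.1 e.2 ∧ e.1 < e.2) : X e.2 - X e.1 =
      ∑ i ∈ Finset.range (n - 1), if e ∈ cutEdges G i then X (i + 1) - X i else 0 := by
    rw [← Finset.sum_filter, ← Finset.sum_Ico_sub X he.2.le]
    refine Finset.sum_congr (Finset.ext fun i => ?_) fun _ _ => rfl
    simp only [Finset.mem_Ico, Finset.mem_filter, Finset.mem_range, mem_cutEdges, he.1, true_and]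
    omega
  have edge_sum (e : Fin n × Fin n) :
      (if G.Adj e.1 e.2 ∧ e.1 < e.2 then (X e.2 - X e.1) ^ 2 else 0) =
        ∑ i ∈ Finset.range (n - 1), ∑ j ∈ Finset.range (n - 1),
          if e ∈ cutEdges G i ∩ cutEdges G j then
            (X (i + 1) - X i) * (X (j + 1) - X j) else 0 := by
    split_ifs with he
    · simp only [gap_sum he, sq, Finset.sum_mul_sum, ite_zero_mul_ite_zero, Finset.mem_inter]
    · refine (Finset.sum_eq_zero fun i _ => Finset.sum_eq_zero fun j _ => if_neg fun hij => ?_).symm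
      obtain ⟨hadj, hle, hlt⟩ := mem_cutEdges.1 (Finset.mem_inter.1 hij).1
      exact he ⟨hadj, hle.trans_lt hlt⟩
  rw [dirichletEnergy_eq_sum_lt, Finset.sum_congr rfl fun e _ => edge_sum e, Finset.sum_comm]
  refine Finset.sum_congr rfl fun i _ => ?_
  rw [Finset.sum_comm]
  refine Finset.sum_congr rfl fun j _ => ?_
  rw [Finset.sum_ite_mem, Finset.univ_inter, Finset.sum_const, nsmul_eq_mul]

lemma NoCutVertex.exists_mem_cutEdges {G : SimpleGraph (Fin n)} (hG : NoCutVertex G) {i : ℕ}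
    {v u w : Fin n} (hui : (u : ℕ) ≤ i) (hiw : i < (w : ℕ)) (huv : u ≠ v) (hwv : w ≠ v) :
    ∃ e ∈ cutEdges G i, e.1 ≠ v ∧ e.2 ≠ v := by
  obtain ⟨a, b, hadj, ha, hb, hav, hbv⟩ :=
    hG.exists_adj {z | (z : ℕ) ≤ i} huv hwv hui (by simpa using hiw)
  exact ⟨(a, b), mem_cutEdges.2 ⟨hadj, ha, not_le.1 hb⟩, hav, hbv⟩

lemma NoCutVertex.two_le_card_cutEdges {G : SimpleGraph (Fin n)} (hG : NoCutVertex G)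
    (hn : 3 ≤ n) {i : ℕ} (hi : i + 1 < n) : 2 ≤ (cutEdges G i).card := by
  obtain ⟨e, he, e', he', hne⟩ : ∃ e ∈ cutEdges G i, ∃ e' ∈ cutEdges G i, e ≠ e' := by
    rcases i.eq_zero_or_pos with rfl | hi0
    · obtain ⟨e, he, -, hne⟩ := hG.exists_mem_cutEdges (i := 0) (v := ⟨1, hi⟩)
        (u := ⟨0, by omega⟩) (w := ⟨2, hn⟩) le_rfl zero_lt_two (by simp) (by simp)
      obtain ⟨e', he', -, hne'⟩ := hG.exists_mem_cutEdges (i := 0) (v := e.2)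
        (u := ⟨0, by omega⟩) (w := ⟨1, hi⟩) le_rfl zero_lt_one
        (Fin.ne_of_lt (mem_cutEdges.1 he).2.2) hne.symm
      exact ⟨e, he, e', he', fun h => hne' (h ▸ rfl)⟩
    · obtain ⟨e, he, hne, -⟩ := hG.exists_mem_cutEdges (i := i) (v := ⟨i, by omega⟩)
        (u := ⟨0, by omega⟩) (w := ⟨i + 1, hi⟩) (by simp) (by simp) (by simp; omega) (by simp)
      obtain ⟨e', he', hne', -⟩ := hG.exists_mem_cutEdges (i := i) (v := e.1)
        (u := ⟨i, by omega⟩) (w := ⟨i + 1, hi⟩) le_rfl (by simp) hne.symm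
        (Fin.ne_of_gt (Nat.lt_succ_of_le (mem_cutEdges.1 he).2.1))
      exact ⟨e, he, e', he', fun h => hne' (h ▸ rfl)⟩
  exact Finset.one_lt_card.2 ⟨e, he, e', he', hne⟩

lemma NoCutVertex.one_le_card_cutEdges_inter {G : SimpleGraph (Fin n)} (hG : NoCutVertex G)
    {i : ℕ} (hi : i + 2 < n) : 1 ≤ (cutEdges G i ∩ cutEdges G (i + 1)).card := by
  obtain ⟨e, he, -, he₂⟩ := hG.exists_mem_cutEdges (i := i) (v := ⟨i + 1, by omega⟩)
    (u := ⟨i, by omega⟩) (w := ⟨i + 2, hi⟩) le_rfl (by simp) (by simp) (by simp)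
  obtain ⟨hadj, hle, hlt⟩ := mem_cutEdges.1 he
  refine Finset.card_pos.2 ⟨e, Finset.mem_inter.2 ⟨he, mem_cutEdges.2 ⟨hadj, by omega, ?_⟩⟩⟩
  exact lt_of_le_of_ne hlt fun h => he₂ (Fin.ext h.symm)

end CutEdges

section Zigzag

variable {n : ℕ}

/-- The cycle `0, 2, 4, …, 5, 3, 1`, in which the vertices `0, 1` and the vertices
`n - 2, n - 1` are adjacent and every other edge joins vertices which differ by `2`.
Among the graphs on `Fin n` without cut vertices it minimizes the Dirichlet energy of every
monotone vector. -/
def zigzag (n : ℕ) : SimpleGraph (Fin n) where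
  Adj a b := (a : ℕ) + 2 = b ∨ (b : ℕ) + 2 = a ∨ (a : ℕ) + b = 1 ∨ (a : ℕ) + b + 3 = 2 * n
  symm := ⟨fun a b h => by omega⟩
  loopless := ⟨fun a h => by omega⟩

lemma cycleGraph_adj_iff_val (hn : 2 ≤ n) {p q : Fin n} : (cycleGraph n).Adj p q ↔
    (p : ℕ) + 1 = q ∨ (q : ℕ) + 1 = p ∨ (p : ℕ) + n = q + 1 ∨ (q : ℕ) + n = p + 1 := by
  rw [cycleGraph_adj']
  have := p.2
  have := q.2
  rcases lt_or_ge p q with h | h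
  · rw [Fin.coe_sub_iff_lt.2 h, Fin.coe_sub_iff_le.2 h.le]
    omega
  · rw [Fin.coe_sub_iff_le.2 h]
    rcases h.eq_or_lt with rfl | h
    · rw [Fin.coe_sub_iff_le.2 le_rfl]
      omega
    · rw [Fin.coe_sub_iff_lt.2 h]
      omega

/-- Position `p` on the cycle carries the vertex `2 p` of the zigzag as long as `2 p < n`; the
odd vertices follow in decreasing order. -/
def cycleGraphIsoZigzag (hn : 3 ≤ n) : cycleGraph n ≃g zigzag n where
  toFun p := ⟨if 2 * (p : ℕ) < n then 2 * p else 2 * (n - p) - 1, by split_ifs <;> omega⟩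
  invFun s := ⟨if (s : ℕ) % 2 = 0 then s / 2 else n - (s + 1) / 2, by split_ifs <;> omega⟩
  left_inv p := by ext; dsimp only; split_ifs <;> omega
  right_inv s := by ext; dsimp only; split_ifs <;> omega
  map_rel_iff' {p q} := by
    rw [cycleGraph_adj_iff_val (by omega)]
    simp only [zigzag, Equiv.coe_fn_mk]
    split_ifs <;> omega

lemma card_cutEdges_zigzag_le (n i : ℕ) : (cutEdges (zigzag n) i).card ≤ 2 := by
  by_contra! hcard
  obtain ⟨⟨a, a'⟩, ha, ⟨b, b'⟩, hb, ⟨c, c'⟩, hc, hab, hac, hbc⟩ := Finset.two_lt_card.1 hcard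
  simp only [mem_cutEdges, zigzag, Prod.mk.injEq, ne_eq, Fin.ext_iff] at ha hb hc hab hac hbc
  omega

lemma card_cutEdges_zigzag_inter_succ_le (n i : ℕ) :
    (cutEdges (zigzag n) i ∩ cutEdges (zigzag n) (i + 1)).card ≤ 1 := by
  refine Finset.card_le_one.2 fun e he e' he' => Prod.ext (Fin.ext ?_) (Fin.ext ?_) <;>
  · simp only [Finset.mem_inter, mem_cutEdges, zigzag] at he he'
    omega

lemma cutEdges_zigzag_inter_eq_empty {i j : ℕ} (hij : i + 2 ≤ j) :
    cutEdges (zigzag n) i ∩ cutEdges (zigzag n) j = ∅ := by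
  refine Finset.eq_empty_of_forall_notMem fun e he => ?_
  simp only [Finset.mem_inter, mem_cutEdges, zigzag] at he
  omega

lemma NoCutVertex.card_cutEdges_zigzag_inter_le {G : SimpleGraph (Fin n)} (hG : NoCutVertex G)
    (hn : 3 ≤ n) {i j : ℕ} (hi : i + 1 < n) (hj : j + 1 < n) :
    (cutEdges (zigzag n) i ∩ cutEdges (zigzag n) j).card ≤
      (cutEdges G i ∩ cutEdges G j).card := by
  wlog hij : i ≤ j generalizing i j
  · simpa only [Finset.inter_comm] using this hj hi (le_of_not_ge hij)
  obtain rfl | rfl | hij : j = i ∨ j = i + 1 ∨ i + 2 ≤ j := by omega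
  · simpa only [Finset.inter_self] using
      (card_cutEdges_zigzag_le n _).trans (hG.two_le_card_cutEdges hn hi)
  · exact (card_cutEdges_zigzag_inter_succ_le n i).trans (hG.one_le_card_cutEdges_inter hj)
  · simp [cutEdges_zigzag_inter_eq_empty hij]

end Zigzag

section Sorting

variable {n : ℕ} {G : SimpleGraph (Fin n)} {X : ℕ → ℝ}

lemma NoCutVertex.card_cutEdges_zigzag_mul_gaps_le (hG : NoCutVertex G) (hn : 3 ≤ n)
    (hX : Monotone X) : ∀ p ∈ Finset.range (n - 1) ×ˢ Finset.range (n - 1),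
      ((cutEdges (zigzag n) p.1 ∩ cutEdges (zigzag n) p.2).card : ℝ) *
          ((X (p.1 + 1) - X p.1) * (X (p.2 + 1) - X p.2)) ≤
        (cutEdges G p.1 ∩ cutEdges G p.2).card *
          ((X (p.1 + 1) - X p.1) * (X (p.2 + 1) - X p.2)) := by
  intro p hp
  rw [Finset.mem_product, Finset.mem_range, Finset.mem_range] at hp
  refine mul_le_mul_of_nonneg_right (mod_cast hG.card_cutEdges_zigzag_inter_le hn ?_ ?_)
    (mul_nonneg (sub_nonneg.2 (hX p.1.le_succ)) (sub_nonneg.2 (hX p.2.le_succ))) <;> omega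

lemma NoCutVertex.dirichletEnergy_zigzag_le (hG : NoCutVertex G) (hn : 3 ≤ n) (hX : Monotone X) :
    dirichletEnergy (zigzag n) (fun i => X i) ≤ dirichletEnergy G (fun i => X i) := by
  simp only [dirichletEnergy_eq_sum_card_cutEdges, ← Finset.sum_product']
  exact Finset.sum_le_sum (hG.card_cutEdges_zigzag_mul_gaps_le hn hX)

lemma NoCutVertex.card_cutEdges_inter_eq (hG : NoCutVertex G) (hn : 3 ≤ n) (hX : Monotone X)
    (heq : dirichletEnergy (zigzag n) (fun i => X i) = dirichletEnergy G (fun i => X i))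
    {i j : ℕ} (hi : i + 1 < n) (hj : j + 1 < n) (hXi : X i < X (i + 1)) (hXj : X j < X (j + 1)) :
    (cutEdges G i ∩ cutEdges G j).card =
      (cutEdges (zigzag n) i ∩ cutEdges (zigzag n) j).card := by
  simp only [dirichletEnergy_eq_sum_card_cutEdges, ← Finset.sum_product'] at heq
  have hterm := (Finset.sum_eq_sum_iff_of_le (hG.card_cutEdges_zigzag_mul_gaps_le hn hX)).1 heq
    (i, j) (by simp only [Finset.mem_product, Finset.mem_range]; omega)
  have hgaps := mul_pos (sub_pos.2 hXi) (sub_pos.2 hXj)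
  exact_mod_cast (mul_right_cancel₀ hgaps.ne' hterm).symm

lemma exists_iso_monotone_isFiedlerVector {V : Type*} [Fintype V] [Nontrivial V]
    (G : SimpleGraph V) (hcard : Fintype.card V = n) :
    ∃ H : SimpleGraph (Fin n), Nonempty (H ≃g G) ∧
      ∃ X : ℕ → ℝ, Monotone X ∧ IsFiedlerVector H (fun i => X i) := by
  classical
  obtain ⟨x, hx⟩ := exists_isFiedlerVector G
  let e : Fin n ≃ V := (Fintype.equivFinOfCardEq hcard).symm
  let σ : Fin n ≃ V := (Tuple.sort (x ∘ e)).trans e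
  have hσ : Monotone (x ∘ σ) := Tuple.monotone_sort (x ∘ e)
  have hn : 0 < n := hcard ▸ Fintype.card_pos
  refine ⟨G.comap σ, ⟨Iso.comap σ G⟩, fun k => x (σ ⟨min k (n - 1), by omega⟩),
    fun k l hkl => hσ (Fin.mk_le_mk.2 (by omega)), ?_⟩
  convert hx.comp_iso (Iso.comap σ G) using 2 with i
  have : min (i : ℕ) (n - 1) = i := by omega
  simp [this]

lemma NoCutVertex.isFiedlerVector_zigzag (hG : NoCutVertex G) (hn : 3 ≤ n) (hX : Monotone X)
    (hle : algCon G ≤ algCon (zigzag n)) (hXG : IsFiedlerVector G (fun i => X i)) :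
    IsFiedlerVector (zigzag n) (fun i => X i) ∧
      dirichletEnergy (zigzag n) (fun i => X i) = dirichletEnergy G (fun i => X i) := by
  have hZG := hG.dirichletEnergy_zigzag_le hn hX
  have hZ := algCon_mul_sum_sq_le (zigzag n) hXG.sum_eq_zero
  have hα := mul_le_mul_of_nonneg_right hle (sum_sq_pos hXG.ne_zero).le
  rw [hXG.energy_eq] at hZG ⊢
  exact ⟨⟨hXG.ne_zero, hXG.sum_eq_zero, by linarith⟩, by linarith⟩

end Sorting

section Gaps

variable {n : ℕ} {X : ℕ → ℝ}

/-- The smaller neighbor of `s` in the zigzag cycle. -/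
def lowerNeighbor (s : ℕ) : ℕ := if s < 2 then 1 - s else s - 2

/-- The larger neighbor of `s` in the zigzag cycle on `n` vertices. -/
def upperNeighbor (n s : ℕ) : ℕ := if s + 2 < n then s + 2 else 2 * n - 3 - s

lemma zigzag_adj_iff_eq_or_eq (hn : 2 ≤ n) {s t : Fin n} :
    (zigzag n).Adj s t ↔ (t : ℕ) = lowerNeighbor s ∨ (t : ℕ) = upperNeighbor n s := by
  simp only [zigzag, lowerNeighbor, upperNeighbor]
  split_ifs <;> omega

lemma lowerNeighbor_lt (hn : 2 ≤ n) (s : Fin n) : lowerNeighbor s < n := by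
  unfold lowerNeighbor; split_ifs <;> omega

lemma upperNeighbor_lt (s : Fin n) : upperNeighbor n s < n := by
  unfold upperNeighbor; split_ifs <;> omega

lemma lowerNeighbor_ne_upperNeighbor (hn : 3 ≤ n) (s : Fin n) :
    lowerNeighbor s ≠ upperNeighbor n s := by
  unfold lowerNeighbor upperNeighbor; split_ifs <;> omega

lemma IsFiedlerVector.add_neighbors (hn : 3 ≤ n) (hX : IsFiedlerVector (zigzag n) (fun i => X i))
    (s : Fin n) :
    X (lowerNeighbor s) + X (upperNeighbor n s) = (2 - algCon (zigzag n)) * X s := by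
  classical
  have neighbors : (zigzag n).neighborFinset s =
      {⟨lowerNeighbor s, lowerNeighbor_lt (Nat.le_of_succ_le hn) s⟩,
        ⟨upperNeighbor n s, upperNeighbor_lt s⟩} := by
    ext t
    simp [zigzag_adj_iff_eq_or_eq (Nat.le_of_succ_le hn), Fin.ext_iff]
  have hne := lowerNeighbor_ne_upperNeighbor hn s
  have heigen := congrFun hX.lapMatrix_mulVec s
  rw [lapMatrix_mulVec_apply, ← card_neighborFinset_eq_degree, neighbors,
    Finset.card_pair (by simpa using hne), Finset.sum_pair (by simpa using hne)] at heigen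
  simp only [Pi.smul_apply, smul_eq_mul, Nat.cast_ofNat] at heigen
  linear_combination -heigen

/-- Subtracting the eigenvector equations at `i` and `i + 1` leaves two nonnegative terms with
sum zero. -/
lemma IsFiedlerVector.eq_neighbors_of_eq (hn : 3 ≤ n) (hmono : Monotone X)
    (hX : IsFiedlerVector (zigzag n) (fun i => X i)) {i : ℕ} (hi : i + 1 < n)
    (heq : X i = X (i + 1)) :
    X (lowerNeighbor i) = X (lowerNeighbor (i + 1)) ∧
      X (upperNeighbor n i) = X (upperNeighbor n (i + 1)) := by
  have lower_le : X (lowerNeighbor i) ≤ X (lowerNeighbor (i + 1)) := by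
    rcases i.eq_zero_or_pos with rfl | h
    · exact heq.ge
    · exact hmono (by unfold lowerNeighbor; split_ifs <;> omega)
  have upper_le : X (upperNeighbor n i) ≤ X (upperNeighbor n (i + 1)) := by
    rcases eq_or_ne (i + 2) n with rfl | h
    · have hi₀ : upperNeighbor (i + 2) i = i + 1 := by unfold upperNeighbor; split_ifs <;> omega
      have hi₁ : upperNeighbor (i + 2) (i + 1) = i := by unfold upperNeighbor; split_ifs <;> omega
      rw [hi₀, hi₁, heq]
    · exact hmono (by unfold upperNeighbor; split_ifs <;> omega)
  have hsum : X (lowerNeighbor i) + X (upperNeighbor n i) =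
      X (lowerNeighbor (i + 1)) + X (upperNeighbor n (i + 1)) :=
    (hX.add_neighbors hn ⟨i, by omega⟩).trans
      ((congrArg _ heq).trans (hX.add_neighbors hn ⟨i + 1, hi⟩).symm)
  exact ⟨by linarith, by linarith⟩

lemma IsFiedlerVector.eq_succ_iff_add_two (hn : 3 ≤ n) (hmono : Monotone X)
    (hX : IsFiedlerVector (zigzag n) (fun i => X i)) {i : ℕ} (hi : i + 3 < n) :
    X i = X (i + 1) ↔ X (i + 2) = X (i + 3) := by
  constructor <;> intro heq
  · have := (hX.eq_neighbors_of_eq hn hmono (by omega) heq).2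
    rwa [upperNeighbor, upperNeighbor, if_pos (by omega), if_pos (by omega)] at this
  · exact (hX.eq_neighbors_of_eq hn hmono hi heq).1

lemma IsFiedlerVector.eq_succ_iff_mod_two (hn : 3 ≤ n) (hmono : Monotone X)
    (hX : IsFiedlerVector (zigzag n) (fun i => X i)) {i : ℕ} (hi : i + 1 < n) :
    X i = X (i + 1) ↔ X (i % 2) = X (i % 2 + 1) := by
  induction i using Nat.twoStepInduction with
  | zero => rfl
  | one => rfl
  | more i ih _ =>
    rw [← hX.eq_succ_iff_add_two hn hmono hi, ih (by omega), Nat.add_mod_right]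

lemma IsFiedlerVector.exists_lt_succ (hmono : Monotone X) {G : SimpleGraph (Fin n)}
    (hX : IsFiedlerVector G (fun i => X i)) : ∃ i, i + 1 < n ∧ X i < X (i + 1) := by
  by_contra! hle
  have const (i : Fin n) : X i = X 0 := by
    obtain ⟨i, hi⟩ := i
    induction i with
    | zero => rfl
    | succ i ih => exact ((hle i hi).antisymm (hmono i.le_succ)).trans (ih (by omega))
  have hsum := hX.sum_eq_zero
  refine hX.ne_zero (funext fun i => ?_)
  have hn : (n : ℝ) ≠ 0 := Nat.cast_ne_zero.2 (Fin.pos i).ne'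
  simpa [const, hn] using hsum

lemma IsFiedlerVector.exists_forall_lt_succ (hn : 3 ≤ n) (hmono : Monotone X)
    (hX : IsFiedlerVector (zigzag n) (fun i => X i)) :
    ∃ ε ≤ 1, ∀ i, i + 1 < n → (i + ε) % 2 = 1 → X i < X (i + 1) := by
  obtain ⟨i, hi, hlt⟩ := hX.exists_lt_succ hmono
  refine ⟨(i + 1) % 2, by omega, fun j hj hodd => (hmono j.le_succ).lt_of_ne fun heq => ?_⟩
  rw [hX.eq_succ_iff_mod_two hn hmono hj, show j % 2 = i % 2 by omega,
    ← hX.eq_succ_iff_mod_two hn hmono hi] at heq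
  exact hlt.ne heq

/-- Every second cut `{0, …, i} | {i + 1, …, n - 1}` of `G` is as small as it can be in a graph
without cut vertices: it has two edges, and it shares none of them with the next such cut. The
parity of these `i` is that of `1 + ε`. -/
structure HasTightCuts (G : SimpleGraph (Fin n)) (ε : ℕ) : Prop where
  card_eq_two : ∀ i, i + 1 < n → (i + ε) % 2 = 1 → (cutEdges G i).card = 2
  disjoint : ∀ i, i + 3 < n → (i + ε) % 2 = 1 → cutEdges G i ∩ cutEdges G (i + 2) = ∅

lemma NoCutVertex.exists_hasTightCuts {G : SimpleGraph (Fin n)} (hG : NoCutVertex G)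
    (hn : 3 ≤ n) (hmono : Monotone X) (hX : IsFiedlerVector (zigzag n) (fun i => X i))
    (heq : dirichletEnergy (zigzag n) (fun i => X i) = dirichletEnergy G (fun i => X i)) :
    ∃ ε ≤ 1, HasTightCuts G ε := by
  obtain ⟨ε, hε, hlt⟩ := hX.exists_forall_lt_succ hn hmono
  refine ⟨ε, hε, fun i hi hodd => ?_, fun i hi hodd => ?_⟩
  · have hcard := hG.card_cutEdges_inter_eq hn hmono heq hi hi (hlt i hi hodd) (hlt i hi hodd)
    simp only [Finset.inter_self] at hcard
    exact (hcard.trans_le (card_cutEdges_zigzag_le n i)).antisymm (hG.two_le_card_cutEdges hn hi)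
  · rw [← Finset.card_eq_zero, hG.card_cutEdges_inter_eq hn hmono heq (by omega) (by omega)
      (hlt i (by omega) hodd) (hlt (i + 2) hi (by omega)), Finset.card_eq_zero]
    exact cutEdges_zigzag_inter_eq_empty le_rfl

end Gaps

section Rails

variable {n ε L : ℕ} {G : SimpleGraph (Fin n)} {a b : ℕ → Fin n}

/-- The index of the block `{2 L - ε, 2 L + 1 - ε}` which contains `v`; the cuts occurring in
`HasTightCuts G ε` are those between consecutive blocks. -/
def level (ε v : ℕ) : ℕ := (v + ε) / 2

lemma level_le_level_pred (ε : ℕ) (v : Fin n) : level ε v ≤ level ε (n - 1) :=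
  Nat.div_le_div_right (by omega)

lemma HasTightCuts.level_of_mem_cutEdges (hG : HasTightCuts G ε) (hε : ε ≤ 1)
    {e : Fin n × Fin n} (he : e ∈ cutEdges G (2 * L + 1 - ε)) :
    level ε e.1 = L ∧ level ε e.2 = L + 1 := by
  obtain ⟨hadj, hle, hlt⟩ := mem_cutEdges.1 he
  have not_mem_of_two_le (i : ℕ) (hi : i + 3 < n) (hodd : (i + ε) % 2 = 1)
      (he : e ∈ cutEdges G i) : e ∉ cutEdges G (i + 2) := fun he' =>
    Finset.notMem_empty e (hG.disjoint i hi hodd ▸ Finset.mem_inter.2 ⟨he, he'⟩)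
  simp only [mem_cutEdges, hadj, true_and] at not_mem_of_two_le
  have below := not_mem_of_two_le (2 * L + 1 - ε - 2)
  have above := not_mem_of_two_le (2 * L + 1 - ε)
  unfold level
  omega

/-- Besides tightness, this uses that the endpoint of two edges in a cut would be a cut vertex,
unless it is alone on its side of the cut. -/
lemma HasTightCuts.exists_cutEdges_eq_pair (hG : HasTightCuts G ε) (hG' : NoCutVertex G)
    (hε : ε ≤ 1) (hL : L < level ε (n - 1)) : ∃ u w u' w' : Fin n,
      cutEdges G (2 * L + 1 - ε) = {(u, w), (u', w')} ∧
        (∀ v : Fin n, level ε v = L ↔ v = u ∨ v = u') ∧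
          ∀ v : Fin n, level ε v = L + 1 ↔ v = w ∨ v = w' := by
  unfold level at hL
  obtain ⟨⟨u, w⟩, ⟨u', w'⟩, hne, hcut⟩ := Finset.card_eq_two.1
    (hG.card_eq_two (2 * L + 1 - ε) (by omega) (by omega))
  have hmem : (u, w) ∈ cutEdges G (2 * L + 1 - ε) := by simp [hcut]
  have hmem' : (u', w') ∈ cutEdges G (2 * L + 1 - ε) := by simp [hcut]
  obtain ⟨hu, hw⟩ := hG.level_of_mem_cutEdges hε hmem
  obtain ⟨hu', hw'⟩ := hG.level_of_mem_cutEdges hε hmem'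
  have avoid {v x y : Fin n} (hx : level ε x = L) (hy : level ε y = L + 1) (hxv : x ≠ v)
      (hyv : y ≠ v) : (u ≠ v ∧ w ≠ v) ∨ (u' ≠ v ∧ w' ≠ v) := by
    unfold level at hx hy
    simpa [hcut] using hG'.exists_mem_cutEdges (i := 2 * L + 1 - ε) (u := x) (w := y)
      (by omega) (by omega) hxv hyv
  refine ⟨u, w, u', w', hcut, fun v => ⟨fun hv => ?_, ?_⟩, fun v => ⟨fun hv => ?_, ?_⟩⟩
  · by_contra! hvu
    have huw : w ≠ u := fun h => by simp [h, hu] at hw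
    have huu' : u ≠ u' := by
      rintro rfl
      simpa using avoid hv hw hvu.1 huw
    simp only [level, ne_eq, Fin.ext_iff] at *
    omega
  · rintro (rfl | rfl) <;> assumption
  · by_contra! hvw
    have huw : u ≠ w := fun h => by simp [← h, hu] at hw
    have hww' : w ≠ w' := by
      rintro rfl
      simpa using avoid hu hv huw hvw.1
    simp only [level, ne_eq, Fin.ext_iff] at *
    omega
  · rintro (rfl | rfl) <;> assumption

/-- Two vertex sequences `a` and `b`, the rails, such that `a L` and `b L` are the (possibly
equal) vertices of level `L` and the edges between different levels are exactly those of the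
two paths `a` and `b`. -/
structure IsRailPair (G : SimpleGraph (Fin n)) (ε : ℕ) (a b : ℕ → Fin n) : Prop where
  level_eq_iff : ∀ L ≤ level ε (n - 1), ∀ v : Fin n, level ε v = L ↔ v = a L ∨ v = b L
  cutEdges_eq : ∀ L < level ε (n - 1),
    cutEdges G (2 * L + 1 - ε) = {(a L, a (L + 1)), (b L, b (L + 1))}

lemma HasTightCuts.exists_isRailPair (hG : HasTightCuts G ε) (hG' : NoCutVertex G)
    (hε : ε ≤ 1) (hn : 2 ≤ n) : ∃ a b, IsRailPair G ε a b := by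
  let IsBlock (L : ℕ) (p : Fin n × Fin n) : Prop := ∀ v : Fin n, level ε v = L ↔ v = p.1 ∨ v = p.2
  have extend (L : ℕ) (p : Fin n × Fin n) : ∃ q : Fin n × Fin n, L < level ε (n - 1) →
      IsBlock L p → IsBlock (L + 1) q ∧
        cutEdges G (2 * L + 1 - ε) = {(p.1, q.1), (p.2, q.2)} := by
    by_cases hL : L < level ε (n - 1) ∧ IsBlock L p
    · obtain ⟨u, w, u', w', hcut, hlow, hhigh⟩ := hG.exists_cutEdges_eq_pair hG' hε hL.1
      obtain ⟨hu, hu'⟩ | ⟨hu, hu'⟩ : (p.1 = u ∧ p.2 = u') ∨ (p.1 = u' ∧ p.2 = u) :=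
        Set.pair_eq_pair_iff.1 (Set.ext fun v => (hL.2 v).symm.trans (hlow v))
      · exact ⟨(w, w'), fun _ _ => ⟨hhigh, by rw [hcut, hu, hu']⟩⟩
      · exact ⟨(w', w), fun _ _ => ⟨fun v => (hhigh v).trans or_comm,
          by rw [hcut, hu, hu', Finset.pair_comm]⟩⟩
    · exact ⟨p, fun h h' => absurd ⟨h, h'⟩ hL⟩
  choose next hnext using extend
  let p₀ : Fin n × Fin n := (⟨0, by omega⟩, ⟨1 - ε, by omega⟩)
  have isBlock_zero : IsBlock 0 p₀ := fun v => by
    simp only [p₀, level, Fin.ext_iff]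
    omega
  let p (L : ℕ) : Fin n × Fin n := L.rec p₀ next
  have isBlock (L : ℕ) (hL : L ≤ level ε (n - 1)) : IsBlock L (p L) := by
    induction L with
    | zero => exact isBlock_zero
    | succ L ih => exact (hnext L (p L) hL (ih (by omega))).1
  exact ⟨fun L => (p L).1, fun L => (p L).2, isBlock, fun L hL =>
    (hnext L (p L) hL (isBlock L hL.le)).2⟩

namespace IsRailPair

lemma symm (h : IsRailPair G ε a b) : IsRailPair G ε b a where
  level_eq_iff L hL v := (h.level_eq_iff L hL v).trans or_comm
  cutEdges_eq L hL := (h.cutEdges_eq L hL).trans (Finset.pair_comm _ _)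

lemma level_left (h : IsRailPair G ε a b) (hL : L ≤ level ε (n - 1)) : level ε (a L) = L :=
  (h.level_eq_iff L hL _).2 (Or.inl rfl)

lemma adj_succ_left (h : IsRailPair G ε a b) (hL : L < level ε (n - 1)) :
    G.Adj (a L) (a (L + 1)) := by
  have : (a L, a (L + 1)) ∈ cutEdges G (2 * L + 1 - ε) := by simp [h.cutEdges_eq L hL]
  exact (mem_cutEdges.1 this).1

lemma eq_of_adj_of_level_lt (h : IsRailPair G ε a b) {u v : Fin n}
    (hadj : G.Adj u v) (hlt : level ε u < level ε v) :
    (u = a (level ε u) ∧ v = a (level ε u + 1)) ∨ (u = b (level ε u) ∧ v = b (level ε u + 1)) := by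
  have hmem : (u, v) ∈ cutEdges G (2 * level ε u + 1 - ε) :=
    mem_cutEdges.2 ⟨hadj, by unfold level; dsimp only; omega, by
      unfold level at *; dsimp only; omega⟩
  rw [h.cutEdges_eq _ (hlt.trans_le (level_le_level_pred ε v))] at hmem
  simpa using hmem

lemma level_eq_succ_of_adj (h : IsRailPair G ε a b) {u v : Fin n}
    (hadj : G.Adj u v) (hlt : level ε u < level ε v) : level ε v = level ε u + 1 := by
  have hL : level ε u + 1 ≤ level ε (n - 1) := Nat.succ_le_of_lt <|
    hlt.trans_le (level_le_level_pred ε v)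
  rcases h.eq_of_adj_of_level_lt hadj hlt with ⟨-, hv⟩ | ⟨-, hv⟩
  · exact congrArg _ (congrArg _ hv) |>.trans (h.level_left hL)
  · exact congrArg _ (congrArg _ hv) |>.trans (h.symm.level_left hL)

lemma left_eq_right_iff (h : IsRailPair G ε a b) (hε : ε ≤ 1) (hL : L ≤ level ε (n - 1)) :
    a L = b L ↔ (L = 0 ∧ ε = 1) ∨ 2 * L = n - 1 + ε := by
  have block (v : Fin n) := h.level_eq_iff L hL v
  have ha := h.level_left hL
  have hb := h.symm.level_left hL
  have := (a L).2
  constructor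
  · intro heq
    by_contra! hL'
    unfold level at hL ha block
    have hfst := (block ⟨2 * L - ε, by omega⟩).1 (by dsimp only; omega)
    have hsnd := (block ⟨2 * L + 1 - ε, by omega⟩).1 (by dsimp only; omega)
    simp only [← heq, or_self, Fin.ext_iff] at hfst hsnd
    omega
  · unfold level at ha hb hL
    intro hL'
    ext
    omega

lemma adj_zero (h : IsRailPair G ε a b) (hG : NoCutVertex G) (hn : 3 ≤ n)
    (hne : a 0 ≠ b 0) : G.Adj (a 0) (b 0) := by
  have hm : 0 < level ε (n - 1) := by unfold level; omega
  have level_a := h.level_left hm.le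
  have level_b := h.symm.level_left hm.le
  have level_a' := h.level_left (L := 1) hm
  refine hG.adj_of_forall_adj (c := a 1) hne ?_ ?_ fun v hadj => ?_
  · exact fun heq => by simp [← heq, level_a] at level_a'
  · exact fun heq => by simp [← heq, level_b] at level_a'
  · rcases (level ε v).eq_zero_or_pos with hv | hv
    · exact Or.inl (((h.level_eq_iff 0 hm.le v).1 hv).resolve_left hadj.ne')
    · have := h.eq_of_adj_of_level_lt hadj (level_a.trans_lt hv)
      rw [level_a] at this
      exact Or.inr (this.resolve_right fun h => hne h.1).2

lemma adj_last (h : IsRailPair G ε a b) (hG : NoCutVertex G) (hn : 3 ≤ n)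
    (hne : a (level ε (n - 1)) ≠ b (level ε (n - 1))) :
    G.Adj (a (level ε (n - 1))) (b (level ε (n - 1))) := by
  obtain ⟨m, hm⟩ : ∃ m, level ε (n - 1) = m + 1 :=
    Nat.exists_eq_succ_of_ne_zero (by unfold level; omega)
  have level_a := h.level_left (L := m + 1) hm.ge
  have level_b := h.symm.level_left (L := m + 1) hm.ge
  have level_a' := h.level_left (L := m) (by omega)
  rw [hm] at hne ⊢
  refine hG.adj_of_forall_adj (c := a m) hne ?_ ?_ fun v hadj => ?_
  · exact fun heq => by simp [heq, level_a'] at level_a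
  · exact fun heq => by simp [heq, level_a'] at level_b
  · rcases (hm ▸ level_le_level_pred ε v).eq_or_lt with hv | hv
    · exact Or.inl (((h.level_eq_iff _ hm.ge v).1 hv).resolve_left hadj.ne')
    · have hlt := hv.trans_eq level_a.symm
      have hlevel : level ε v = m :=
        Nat.succ.inj ((h.level_eq_succ_of_adj hadj.symm hlt).symm.trans level_a)
      have := h.eq_of_adj_of_level_lt hadj.symm hlt
      rw [hlevel] at this
      exact Or.inr (this.resolve_right fun h => hne h.2).1

end IsRailPair

end Rails

section RailCycle

variable {n ε L : ℕ} {G : SimpleGraph (Fin n)} {a b : ℕ → Fin n}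

/-- The closed walk up the rail `a` and back down the rail `b`, at time `p ≤ n - 1 + ε`. It has
level `min p (n - 1 + ε - p)`, and for `ε = 1` it ends at `b 0 = a 0`. -/
def railCycle (ε : ℕ) (a b : ℕ → Fin n) (p : ℕ) : Fin n :=
  if p ≤ level ε (n - 1) then a p else b (n - 1 + ε - p)

lemma railCycle_of_le (hp : L ≤ level ε (n - 1)) : railCycle ε a b L = a L := if_pos hp

namespace IsRailPair

lemma railCycle_sub (h : IsRailPair G ε a b) (hε : ε ≤ 1) (hL : L ≤ level ε (n - 1)) :
    railCycle ε a b (n - 1 + ε - L) = b L := by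
  unfold railCycle
  split_ifs with hle
  · have hsub : n - 1 + ε - L = L := by unfold level at *; omega
    rw [hsub, (h.left_eq_right_iff hε hL).2 (by omega)]
  · congr 1
    unfold level at hL
    omega

lemma railCycle_injOn (h : IsRailPair G ε a b) (hε : ε ≤ 1) :
    Set.InjOn (railCycle ε a b) (Set.Iio n) := by
  have surj : Function.Surjective fun p : Fin n => railCycle ε a b p := by
    intro v
    have hL := level_le_level_pred ε v
    rcases (h.level_eq_iff _ hL v).1 rfl with hv | hv
    · exact ⟨⟨level ε v, by unfold level at *; omega⟩, (railCycle_of_le hL).trans hv.symm⟩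
    · by_cases hlt : n - 1 + ε - level ε v < n
      · exact ⟨⟨n - 1 + ε - level ε v, hlt⟩, (h.railCycle_sub hε hL).trans hv.symm⟩
      · refine ⟨⟨level ε v, by unfold level at *; omega⟩, (railCycle_of_le hL).trans ?_⟩
        rw [(h.left_eq_right_iff hε hL).2 (Or.inl (by omega)), ← hv]
  intro p hp q hq hpq
  have inj := Finite.injective_iff_surjective.2 surj
  exact congrArg Fin.val (inj (a₁ := ⟨p, hp⟩) (a₂ := ⟨q, hq⟩) hpq)

lemma level_railCycle (h : IsRailPair G ε a b) (p : ℕ) :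
    level ε (railCycle ε a b p) = min p (n - 1 + ε - p) := by
  unfold railCycle
  split_ifs with hle
  · rw [h.level_left hle]
    unfold level at hle
    omega
  · rw [h.symm.level_left] <;>
    · unfold level at *
      omega

lemma adj_railCycle_succ (h : IsRailPair G ε a b) (hG : NoCutVertex G) (hε : ε ≤ 1) (hn : 3 ≤ n)
    {p : ℕ} (hp : p < n - 1 + ε) : G.Adj (railCycle ε a b p) (railCycle ε a b (p + 1)) := by
  rcases lt_trichotomy p (level ε (n - 1)) with hlt | rfl | hgt
  · rw [railCycle_of_le hlt.le, railCycle_of_le hlt]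
    exact h.adj_succ_left hlt
  · rw [railCycle_of_le le_rfl]
    set m := level ε (n - 1) with hm
    unfold level at hm
    by_cases heq : a m = b m
    · rw [show m + 1 = n - 1 + ε - (m - 1) by have := (h.left_eq_right_iff hε le_rfl).1 heq; omega,
        h.railCycle_sub hε (Nat.sub_le _ _), heq]
      have hsucc := h.symm.adj_succ_left (L := m - 1) (by omega)
      rw [Nat.sub_add_cancel (by omega)] at hsucc
      exact hsucc.symm
    · rw [show m + 1 = n - 1 + ε - m by have := (h.left_eq_right_iff hε le_rfl).not.1 heq; omega,
        h.railCycle_sub hε le_rfl]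
      exact h.adj_last hG hn heq
  · rw [railCycle, railCycle, if_neg hgt.not_ge, if_neg (by omega),
      show n - 1 + ε - p = n - 1 + ε - (p + 1) + 1 by omega]
    exact (h.symm.adj_succ_left (by unfold level at *; omega)).symm

lemma adj_railCycle_zero (h : IsRailPair G ε a b) (hG : NoCutVertex G) (hε : ε ≤ 1)
    (hn : 3 ≤ n) : G.Adj (railCycle ε a b 0) (railCycle ε a b (n - 1)) := by
  have hlast := h.railCycle_sub hε (Nat.zero_le _)
  rcases Nat.le_one_iff_eq_zero_or_eq_one.1 hε with rfl | rfl
  · rw [← show n - 1 + 0 - 0 = n - 1 from rfl, hlast]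
    exact h.adj_zero hG hn ((h.left_eq_right_iff hε (Nat.zero_le _)).not.2 (by omega))
  · have hsucc := h.adj_railCycle_succ hG hε hn (p := n - 1) (by omega)
    rw [show n - 1 + 1 = n - 1 + 1 - 0 from rfl, hlast,
      ← (h.left_eq_right_iff hε (Nat.zero_le _)).2 (Or.inl ⟨rfl, rfl⟩)] at hsucc
    exact hsucc.symm

lemma cycleGraph_adj_of_level_lt (h : IsRailPair G ε a b) (hε : ε ≤ 1) (hn : 2 ≤ n)
    {p q : Fin n} (hadj : G.Adj (railCycle ε a b p) (railCycle ε a b q))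
    (hlt : level ε (railCycle ε a b p) < level ε (railCycle ε a b q)) :
    (cycleGraph n).Adj p q := by
  have time_eq {r : Fin n} {t : ℕ} (ht : t < n)
      (heq : railCycle ε a b r = railCycle ε a b t) : (r : ℕ) = t :=
    h.railCycle_injOn hε r.2 ht heq
  have hL := hlt.trans_le (level_le_level_pred ε _)
  have hrail := h.eq_of_adj_of_level_lt hadj hlt
  generalize level ε (railCycle ε a b p) = L at hL hrail
  rw [cycleGraph_adj_iff_val hn]
  have hLn : L + 1 < n ∧ L + 1 ≤ n - 1 + ε := by unfold level at hL; omega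
  rcases hrail with ⟨hp, hq⟩ | ⟨hp, hq⟩
  · rw [← railCycle_of_le (a := a) (b := b) hL.le] at hp
    rw [← railCycle_of_le (a := a) (b := b) hL] at hq
    exact Or.inl (by rw [time_eq (by omega) hp, time_eq (by omega) hq])
  · rw [← h.railCycle_sub hε hL] at hq
    have hq := time_eq (by omega) hq
    by_cases hclosed : L = 0 ∧ ε = 1
    · rw [← (h.left_eq_right_iff hε hL.le).2 (Or.inl hclosed),
        ← railCycle_of_le (a := a) (b := b) hL.le] at hp
      have hp := time_eq (by omega) hp
      omega
    · rw [← h.railCycle_sub hε hL.le] at hp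
      have hp := time_eq (by omega) hp
      omega

lemma adj_railCycle_of_cycleGraph_adj (h : IsRailPair G ε a b) (hG : NoCutVertex G)
    (hε : ε ≤ 1) (hn : 3 ≤ n) {p q : Fin n} (hadj : (cycleGraph n).Adj p q) :
    G.Adj (railCycle ε a b p) (railCycle ε a b q) := by
  wlog hpq : p ≤ q generalizing p q
  · exact (this hadj.symm (le_of_not_ge hpq)).symm
  rw [cycleGraph_adj_iff_val (by omega)] at hadj
  obtain hsucc | ⟨hp, hq⟩ : (p : ℕ) + 1 = q ∨ ((p : ℕ) = 0 ∧ (q : ℕ) = n - 1) := by omega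
  · rw [← hsucc]
    exact h.adj_railCycle_succ hG hε hn (by omega)
  · rw [hp, hq]
    exact h.adj_railCycle_zero hG hε hn

lemma cycleGraph_adj_or_add_eq (h : IsRailPair G ε a b) (hε : ε ≤ 1) (hn : 2 ≤ n) {p q : Fin n}
    (hadj : G.Adj (railCycle ε a b p) (railCycle ε a b q)) :
    (cycleGraph n).Adj p q ∨ (p : ℕ) + q = n - 1 + ε := by
  rcases lt_trichotomy (level ε (railCycle ε a b p)) (level ε (railCycle ε a b q)) with
    hlt | heq | hgt
  · exact Or.inl (h.cycleGraph_adj_of_level_lt hε hn hadj hlt)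
  · have hne : (p : ℕ) ≠ q := fun hpq => hadj.ne (congrArg _ hpq)
    rw [h.level_railCycle, h.level_railCycle] at heq
    omega
  · exact Or.inl (h.cycleGraph_adj_of_level_lt hε hn hadj.symm hgt).symm

end IsRailPair

end RailCycle

section Chords

variable {n : ℕ}

lemma cyclePlusChords_zero (f : Fin 0 → ℕ × ℕ) : cyclePlusChords n 0 f = cycleGraph n := by
  simp [cyclePlusChords]

lemma exists_eq_cyclePlusChords {c : ℕ} (hc : n - 1 ≤ c) {K : SimpleGraph (Fin n)}
    (hcycle : cycleGraph n ≤ K)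
    (hK : ∀ p q : Fin n, K.Adj p q → (cycleGraph n).Adj p q ∨ (p : ℕ) + q = c) :
    ∃ (k : ℕ) (i : Fin k → ℕ), Monotone i ∧ (∀ j, 1 ≤ i j ∧ 2 * i j + 1 < c) ∧
      K = cyclePlusChords n k (fun j => (i j, c - i j)) := by
  classical
  let S : Finset ℕ := {p ∈ Finset.range c | 1 ≤ p ∧ 2 * p + 1 < c ∧
    ∃ u v : Fin n, (u : ℕ) = p ∧ (v : ℕ) = c - p ∧ K.Adj u v}
  have hS {p : ℕ} : p ∈ S ↔ 1 ≤ p ∧ 2 * p + 1 < c ∧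
      ∃ u v : Fin n, (u : ℕ) = p ∧ (v : ℕ) = c - p ∧ K.Adj u v := by
    simp only [S, Finset.mem_filter, Finset.mem_range, and_iff_right_iff_imp]
    omega
  let i := S.orderEmbOfFin rfl
  have hi (j : Fin S.card) := hS.1 (S.orderEmbOfFin_mem rfl j)
  refine ⟨S.card, i, i.monotone, fun j => ⟨(hi j).1, (hi j).2.1⟩, le_antisymm ?_ ?_⟩
  · intro p q hpq
    wlog hlt : p < q generalizing p q
    · exact (this hpq.symm (lt_of_le_of_ne (le_of_not_gt hlt) hpq.ne')).symm
    rcases hK p q hpq with hadj | hsum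
    · exact Or.inl hadj
    · by_cases hadj : (cycleGraph n).Adj p q
      · exact Or.inl hadj
      rw [cycleGraph_adj_iff_val (by omega)] at hadj
      have hmem : (p : ℕ) ∈ S := hS.2 ⟨by omega, by omega, p, q, rfl, by omega, hpq⟩
      obtain ⟨j, hj⟩ : (p : ℕ) ∈ Set.range i := by rwa [S.range_orderEmbOfFin rfl]
      exact Or.inr ⟨⟨j, p, q, hj.symm, by dsimp only; omega, rfl⟩, hpq.ne⟩
  · refine sup_le hcycle ?_
    rintro p q ⟨⟨j, u, v, hu, hv, huv⟩, -⟩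
    obtain ⟨-, -, u', v', hu', hv', hadj⟩ := hi j
    obtain rfl : u' = u := Fin.ext (hu'.trans hu.symm)
    obtain rfl : v' = v := Fin.ext (hv'.trans hv.symm)
    exact K.mem_edgeSet.1 (huv ▸ K.mem_edgeSet.2 hadj)

lemma IsRailPair.exists_iso_cyclePlusChords {ε : ℕ} {G : SimpleGraph (Fin n)}
    {a b : ℕ → Fin n} (h : IsRailPair G ε a b) (hG : NoCutVertex G) (hε : ε ≤ 1) (hn : 3 ≤ n) :
    ∃ (k : ℕ) (i : Fin k → ℕ), Monotone i ∧ (∀ j, 1 ≤ i j ∧ 2 * i j + 1 < n - 1 + ε) ∧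
      Nonempty (G ≃g cyclePlusChords n k (fun j => (i j, n - 1 + ε - i j))) := by
  have inj : Function.Injective fun p : Fin n => railCycle ε a b p :=
    fun p q hpq => Fin.ext (h.railCycle_injOn hε p.2 q.2 hpq)
  let e : Fin n ≃ Fin n := Equiv.ofBijective _ (Finite.injective_iff_bijective.1 inj)
  obtain ⟨k, i, hmono, hi, hK⟩ := exists_eq_cyclePlusChords (Nat.le_add_right (n - 1) ε)
    (K := G.comap e) (fun _ _ => h.adj_railCycle_of_cycleGraph_adj hG hε hn)
    (fun _ _ => h.cycleGraph_adj_or_add_eq hε (by omega))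
  exact ⟨k, i, hmono, hi, ⟨(Iso.comap e G).symm.trans (hK ▸ Iso.refl)⟩⟩

end Chords

lemma NoCutVertex.exists_iso_cyclePlusChords {V : Type*} [Fintype V] [DecidableEq V] {n : ℕ}
    {G : SimpleGraph V} (hG : NoCutVertex G) (hcard : Fintype.card V = n) (hn : 3 ≤ n)
    (hle : algCon G ≤ algCon (cycleGraph n)) :
    ∃ ε ≤ 1, ∃ (k : ℕ) (i : Fin k → ℕ), Monotone i ∧
      (∀ j, 1 ≤ i j ∧ 2 * i j + 1 < n - 1 + ε) ∧
        Nonempty (G ≃g cyclePlusChords n k (fun j => (i j, n - 1 + ε - i j))) := by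
  have : Nontrivial V := Fintype.one_lt_card_iff_nontrivial.1 (by omega)
  obtain ⟨H, ⟨e⟩, X, hmono, hXH⟩ := exists_iso_monotone_isFiedlerVector G hcard
  have hH := hG.of_iso e
  have hleH : algCon H ≤ algCon (zigzag n) :=
    (algCon_congr e).trans_le (hle.trans_eq (algCon_congr (cycleGraphIsoZigzag hn)))
  obtain ⟨hXZ, henergy⟩ := hH.isFiedlerVector_zigzag hn hmono hleH hXH
  obtain ⟨ε, hε, htight⟩ := hH.exists_hasTightCuts hn hmono hXZ henergy
  obtain ⟨a, b, hrails⟩ := htight.exists_isRailPair hH hε (by omega)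
  obtain ⟨k, i, hi, hbound, ⟨f⟩⟩ := hrails.exists_iso_cyclePlusChords hH hε hn
  exact ⟨ε, hε, k, i, hi, hbound, ⟨e.symm.trans f⟩⟩

theorem twoConnected_even_equality_characterization_general
    {V : Type*} [Fintype V] [DecidableEq V] {n : ℕ}
    (G : SimpleGraph V) (hcard : Fintype.card V = n) (hn : 3 ≤ n)
    (hG : TwoConnected G) (hle : algCon G ≤ algCon (cycleGraph n)) :
    Nonempty (G ≃g cycleGraph n) ∨
      (∃ (k : ℕ) (i : Fin k → ℕ), 1 ≤ k ∧ Monotone i ∧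
        (∀ j, 1 ≤ i j ∧ i j ≤ (n - 2) / 2) ∧ Nonempty (G ≃g H12 n k i)) ∨
      (∃ (s : ℕ) (j : Fin s → ℕ), 1 ≤ s ∧ Monotone j ∧
        (∀ t, 1 ≤ j t ∧ j t ≤ (n - 3) / 2) ∧ Nonempty (G ≃g H3 n s j)) := by
  obtain ⟨ε, hε, k, i, hmono, hi, hiso⟩ := hG.noCutVertex.exists_iso_cyclePlusChords hcard hn hle
  rcases k.eq_zero_or_pos with rfl | hk
  · rw [cyclePlusChords_zero] at hiso
    exact Or.inl hiso
  rcases Nat.le_one_iff_eq_zero_or_eq_one.1 hε with rfl | rfl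
  · refine Or.inr (Or.inr ⟨k, i, hk, hmono, fun j => ⟨(hi j).1, by have := hi j; omega⟩, ?_⟩)
    simpa only [H3, add_zero, Nat.sub_right_comm] using hiso
  · refine Or.inr (Or.inl ⟨k, i, hk, hmono, fun j => ⟨(hi j).1, by have := hi j; omega⟩, ?_⟩)
    rwa [Nat.sub_add_cancel (by omega)] at hiso

theorem twoConnected_even_equality_characterization
    {V : Type*} [Fintype V] [DecidableEq V] {n : ℕ}
    (G : SimpleGraph V) (hcard : Fintype.card V = n) (heven : Even n) (hn : 4 ≤ n)
    (hG : TwoConnected G) (heq : algCon G = algCon (SimpleGraph.cycleGraph n)) :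
    Nonempty (G ≃g SimpleGraph.cycleGraph n) ∨
      (∃ (k : ℕ) (i : Fin k → ℕ), 1 ≤ k ∧ Monotone i ∧
        (∀ j, 1 ≤ i j ∧ i j ≤ (n - 2) / 2) ∧ Nonempty (G ≃g H12 n k i)) ∨
      (∃ (s : ℕ) (j : Fin s → ℕ), 1 ≤ s ∧ Monotone j ∧
        (∀ t, 1 ≤ j t ∧ j t ≤ (n - 4) / 2) ∧ Nonempty (G ≃g H3 n s j)) := by
  have hbound : (n - 4) / 2 = (n - 3) / 2 := by have := Nat.even_iff.1 heven; omega
  rw [hbound]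
  exact twoConnected_even_equality_characterization_general G hcard (by omega) hG heq.le
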